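/- For every τ ∈ ℍ and every z ∈ ℂ one has the generating function identity ∑_{n≥0} (−1)^n U_{2n}(q) (πz)^{2n+1}/(2n+1)! = −ϑ(z;τ)/(2 η(τ)³), the series on the left converging for all z ∈ ℂ. -/

import Mathlib

/-!
Write `T j = j (j + 1) / 2`. Expanding `sin ((2j+1) π z)` in its Taylor series and exchanging the two
summations turns the left-hand side into `(∑ (-1)^j q^(T j) sin ((2j+1) π z)) / D` with
`D = ∑ (-1)^j (2j+1) q^(T j)`; the exchange is justified by the absolute convergence of
`∑ |q|^(T j) e^((2j+1) |π z|)` (`summable_theta_bound`). Pairing the indices `j` and `-(j+1)` in the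
theta series gives `ϑ(z;τ) = -2 q^(1/8) ∑ (-1)^j q^(T j) sin ((2j+1) π z)` (`jacobiThetaFn_eq`).
What remains is Jacobi's identity `D = ∏ (1 - qⁿ)³` (`jacobi_identity`).

Jacobi's identity is obtained as the limit of a finite version (`sum_jcoef`). With
`(q)ₙ = ∏_{i=1}^n (1 - qⁱ)`,
`∑_{j=0}^n (-1)^j (2j+1) q^(T j) (q)_{2n+1} / ((q)_{n-j} (q)_{n+j+1}) = (q)ₙ²`.
This is proved by induction on `n`: the coefficients `a n j` (without the factor `2j+1`) satisfy
`a (n+1) j = (1 + Q²) a n j - Q (a n (j-1) + a n (j+1))`, `Q = q^(n+1)`, with the convention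
`a n (-1) = -a n 0`, and since `j ↦ 2j+1` is an odd affine function about `j = -1/2`, summation by
parts makes the weighted sum pick up the factor `1 + Q² - 2Q = (1 - Q)²`. As `n → ∞`, dominated
convergence gives `D / (q)_∞ = (q)_∞²`.
-/

open Complex Filter
open scoped Real

noncomputable section

/-- `q = e^{2πiτ}`. -/
def qq (τ : ℂ) : ℂ := Complex.exp (2 * (π : ℂ) * Complex.I * τ)

/-- The Jacobi theta function `ϑ(z;τ) = ∑_{n∈ℤ+1/2} e^{2πin(z+1/2)} q^{n²/2}`. -/
def jacobiThetaFn (z τ : ℂ) : ℂ :=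
  ∑' n : ℤ, Complex.exp (2 * (π : ℂ) * Complex.I * ((n : ℂ) + 1 / 2) * (z + 1 / 2)) *
    Complex.exp ((π : ℂ) * Complex.I * τ * ((n : ℂ) + 1 / 2) ^ 2)

/-- The Dedekind eta function `η(τ) = q^{1/24} ∏_{n≥1} (1 - qⁿ)`. -/
def dedekindEtaFn (τ : ℂ) : ℂ :=
  Complex.exp (2 * (π : ℂ) * Complex.I * τ / 24) * ∏' n : ℕ, (1 - qq τ ^ (n + 1))

/-- Ramanujan's series `U_{2n}(q)`:
numerator `∑_{j≥0} (−1)^j (2j+1)^{2n+1} q^{j(j+1)/2}` divided by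
denominator `∑_{j≥0} (−1)^j (2j+1) q^{j(j+1)/2}`. -/
def Uram (n : ℕ) (q : ℂ) : ℂ :=
  (∑' j : ℕ, (-1 : ℂ) ^ j * ((2 * j + 1 : ℕ) : ℂ) ^ (2 * n + 1) * q ^ (j * (j + 1) / 2)) /
    (∑' j : ℕ, (-1 : ℂ) ^ j * ((2 * j + 1 : ℕ) : ℂ) * q ^ (j * (j + 1) / 2))

open Topology

/-! ### A finite form of Jacobi's identity -/

/-- The finite `q`-Pochhammer symbol `(q)ₙ = ∏_{i=1}^n (1 - qⁱ)`. -/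
def qpoch (q : ℂ) (n : ℕ) : ℂ := ∏ i ∈ Finset.range n, (1 - q ^ (i + 1))

/-- `1 / (q)_{n-j}`, extended by `0` to `j > n`, as the usual convention for `q`-binomial
coefficients requires. -/
def qinv (q : ℂ) (n j : ℕ) : ℂ := if j ≤ n then (qpoch q (n - j))⁻¹ else 0

/-- The coefficient `(-1)^j q^(j(j+1)/2) (q)_{2n+1} / ((q)_{n-j} (q)_{n+j+1})` of the finite Jacobi
identity; it vanishes for `j > n`. -/
def jcoef (q : ℂ) (n j : ℕ) : ℂ :=
  (-1) ^ j * q ^ (j * (j + 1) / 2) * qpoch q (2 * n + 1) * qinv q n j * (qpoch q (n + j + 1))⁻¹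

lemma triangle_step (j : ℕ) : (j + 1) * (j + 1 + 1) / 2 = j * (j + 1) / 2 + (j + 1) := by
  have : (j + 1) * (j + 1 + 1) = j * (j + 1) + (j + 1) * 2 := by ring
  rw [this, Nat.add_mul_div_right _ _ (by norm_num)]

lemma qpoch_succ (q : ℂ) (n : ℕ) : qpoch q (n + 1) = qpoch q n * (1 - q ^ (n + 1)) := by
  simp [qpoch, Finset.prod_range_succ]

lemma one_sub_pow_ne_zero {q : ℂ} (hq : ‖q‖ < 1) (n : ℕ) : 1 - q ^ (n + 1) ≠ 0 := by
  rw [sub_ne_zero]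
  intro h
  have h1 : ‖q ^ (n + 1)‖ < 1 := by
    rw [norm_pow]
    exact pow_lt_one₀ (norm_nonneg _) hq (by simp)
  rw [← h] at h1
  simp at h1

lemma qpoch_ne_zero {q : ℂ} (hq : ‖q‖ < 1) (n : ℕ) : qpoch q n ≠ 0 :=
  Finset.prod_ne_zero_iff.2 fun i _ => one_sub_pow_ne_zero hq i

lemma qpoch_inv {q : ℂ} (hq : ‖q‖ < 1) (n : ℕ) :
    (qpoch q n)⁻¹ = (1 - q ^ (n + 1)) * (qpoch q (n + 1))⁻¹ := by
  rw [qpoch_succ]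
  have := qpoch_ne_zero hq n
  have := one_sub_pow_ne_zero hq n
  field_simp

lemma qinv_succ_succ (q : ℂ) (n j : ℕ) : qinv q (n + 1) (j + 1) = qinv q n j := by
  simp [qinv]

/-- The recursion `1 / (q)_{n-j} = (1 - q^(n+1-j)) / (q)_{n+1-j}`, multiplied by `q^j` so that it
holds for all `j`, including `j > n`. -/
lemma qinv_step {q : ℂ} (hq : ‖q‖ < 1) (n j : ℕ) :
    q ^ j * qinv q n j = (q ^ j - q ^ (n + 1)) * qinv q (n + 1) j := by
  rcases lt_trichotomy j (n + 1) with h | h | h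
  · obtain ⟨d, rfl⟩ := Nat.exists_eq_add_of_le (Nat.lt_succ_iff.1 h)
    have h1 : j + d + 1 - j = d + 1 := by omega
    have h2 : j + d - j = d := by omega
    rw [qinv, qinv, if_pos (by omega), if_pos (by omega), h1, h2, qpoch_inv hq d]
    ring
  · subst h
    simp [qinv]
  · rw [qinv, qinv, if_neg (by omega), if_neg (by omega)]
    simp

lemma jcoef_succ_succ {q : ℂ} (hq : ‖q‖ < 1) (n j : ℕ) :
    jcoef q (n + 1) (j + 1) = (1 + (q ^ (n + 1)) ^ 2) * jcoef q n (j + 1)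
      - q ^ (n + 1) * (jcoef q n j + jcoef q n (j + 2)) := by
  have e1 := qinv_step hq n (j + 1)
  have e2 := qinv_step hq n (j + 2)
  rw [qinv_succ_succ] at e1 e2
  have p1 : qpoch q (2 * (n + 1) + 1)
      = qpoch q (2 * n + 1) * (1 - q ^ (2 * n + 2)) * (1 - q ^ (2 * n + 3)) := by
    rw [show 2 * (n + 1) + 1 = 2 * n + 1 + 1 + 1 by ring, qpoch_succ, qpoch_succ]
  have k1 := qpoch_inv hq (n + j + 2)
  have k2 := qpoch_inv hq (n + j + 1)
  rw [show n + j + 1 + 1 = n + j + 2 by ring, k1] at k2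
  have t1 := triangle_step j
  have t2 := triangle_step (j + 1)
  rw [t1] at t2
  simp only [jcoef]
  rw [show j + 2 = j + 1 + 1 by ring, t2, t1, qinv_succ_succ, p1,
    show n + 1 + (j + 1) + 1 = n + j + 2 + 1 by ring,
    show n + (j + 1) + 1 = n + j + 2 by ring,
    show n + (j + 1 + 1) + 1 = n + j + 2 + 1 by ring, k2, k1]
  rw [show j + 2 = j + 1 + 1 by ring] at e2
  set K := (qpoch q (n + j + 2 + 1))⁻¹
  set G := qinv q n j
  set P := qpoch q (2 * n + 1)
  set t := q ^ (j * (j + 1) / 2) with ht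
  have f2 : q ^ (j + 1) * q ^ (j + 1 + 1) * qinv q n (j + 1 + 1)
      = (q ^ (j + 1 + 1) - q ^ (n + 1)) * ((q ^ (j + 1) - q ^ (n + 1)) * G) := by
    rw [mul_assoc, e2, ← e1]; ring
  have g1 : q ^ (j * (j + 1) / 2 + (j + 1)) = t * q ^ (j + 1) := by rw [pow_add]
  have g2 : q ^ (j * (j + 1) / 2 + (j + 1) + (j + 1 + 1)) = t * (q ^ (j + 1) * q ^ (j + 1 + 1)) := by
    rw [pow_add, pow_add, mul_assoc]
  rw [g1, g2]
  linear_combination (-(1 + (q ^ (n + 1)) ^ 2) * (-1) ^ (j + 1) * t * P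
      * ((1 - q ^ (n + j + 2 + 1)) * K)) * e1
    + q ^ (n + 1) * (-1) ^ (j + 1 + 1) * t * P * K * f2

lemma jcoef_succ_zero {q : ℂ} (hq : ‖q‖ < 1) (n : ℕ) :
    jcoef q (n + 1) 0 = (1 + (q ^ (n + 1)) ^ 2) * jcoef q n 0
      - q ^ (n + 1) * (jcoef q n 1 - jcoef q n 0) := by
  have e0 := qinv_step hq n 0
  have e1 := qinv_step hq n 1
  rw [show (1 : ℕ) = 0 + 1 by rfl, qinv_succ_succ] at e1
  have p1 : qpoch q (2 * (n + 1) + 1)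
      = qpoch q (2 * n + 1) * (1 - q ^ (2 * n + 2)) * (1 - q ^ (2 * n + 3)) := by
    rw [show 2 * (n + 1) + 1 = 2 * n + 1 + 1 + 1 by ring, qpoch_succ, qpoch_succ]
  have k1 := qpoch_inv hq (n + 1)
  simp only [jcoef]
  simp only [zero_add, pow_zero, one_mul, zero_mul, Nat.zero_div, add_zero, pow_one,
    Nat.reduceAdd, Nat.reduceDiv] at *
  rw [p1, k1]
  rw [e0] at e1 ⊢
  linear_combination q ^ (n + 1) * (- qpoch q (2 * n + 1) * (qpoch q (n + 1 + 1))⁻¹) * e1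

lemma jcoef_eq_zero (q : ℂ) {n j : ℕ} (h : n < j) : jcoef q n j = 0 := by
  simp [jcoef, qinv, not_le.2 h]

/-- Summation by parts against the weight `2j+1`, with the boundary term made explicit. -/
lemma sum_weight_step (Q : ℂ) (a b : ℕ → ℂ)
    (h0 : b 0 = (1 + Q ^ 2) * a 0 - Q * (a 1 - a 0))
    (h1 : ∀ j, b (j + 1) = (1 + Q ^ 2) * a (j + 1) - Q * (a j + a (j + 2))) (M : ℕ) :
    ∑ j ∈ Finset.range (M + 1), (2 * (j : ℂ) + 1) * b j
      = (1 - Q) ^ 2 * ∑ j ∈ Finset.range (M + 1), (2 * (j : ℂ) + 1) * a j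
        - Q * ((2 * M + 1) * a (M + 1) - (2 * M + 3) * a M) := by
  induction M with
  | zero => simp [h0]; ring
  | succ M ih =>
    rw [Finset.sum_range_succ, ih, Finset.sum_range_succ _ (M + 1), h1]
    push_cast
    ring

lemma sum_jcoef {q : ℂ} (hq : ‖q‖ < 1) (n : ℕ) :
    ∑ j ∈ Finset.range (n + 1), (2 * (j : ℂ) + 1) * jcoef q n j = qpoch q n ^ 2 := by
  induction n with
  | zero =>
    have h1 := one_sub_pow_ne_zero hq 0
    simp only [zero_add, pow_one] at h1
    simp [jcoef, qinv, qpoch, h1]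
  | succ n ih =>
    rw [sum_weight_step (q ^ (n + 1)) (jcoef q n) (jcoef q (n + 1)) (jcoef_succ_zero hq n)
      (jcoef_succ_succ hq n), Finset.sum_range_succ, ih, jcoef_eq_zero q (by omega : n < n + 1),
      jcoef_eq_zero q (by omega : n < n + 1 + 1), qpoch_succ]
    ring

/-! ### Absolute convergence -/

lemma hasSum_congr_terms {f g : ℕ → ℂ} {a : ℂ} (h : ∀ n, f n = g n) :
    HasSum f a ↔ HasSum g a := by
  rw [funext h]

/-- The majorant for every series in the argument. -/
lemma summable_theta_bound {r : ℝ} (hr0 : 0 < r) (hr : r < 1) (c : ℝ) :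
    Summable fun j : ℕ => r ^ (j * (j + 1) / 2) * Real.exp ((2 * j + 1) * c) := by
  refine summable_of_ratio_test_tendsto_lt_one (l := 0) one_pos
    (Eventually.of_forall fun j => by positivity) ?_
  have h1 : ∀ j : ℕ, ‖r ^ ((j + 1) * (j + 1 + 1) / 2) * Real.exp ((2 * ((j + 1 : ℕ) : ℝ) + 1) * c)‖
      / ‖r ^ (j * (j + 1) / 2) * Real.exp ((2 * (j : ℝ) + 1) * c)‖
      = r ^ j * (r * Real.exp (2 * c)) := by
    intro j
    have h2 : Real.exp ((2 * ((j + 1 : ℕ) : ℝ) + 1) * c)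
        = Real.exp ((2 * (j : ℝ) + 1) * c) * Real.exp (2 * c) := by
      rw [← Real.exp_add]; congr 1; push_cast; ring
    rw [Real.norm_of_nonneg (by positivity), Real.norm_of_nonneg (by positivity), h2,
      triangle_step, pow_add, pow_succ r j]
    field_simp
  simp_rw [h1]
  simpa using (tendsto_pow_atTop_nhds_zero_of_lt_one hr0.le hr).mul_const (r * Real.exp (2 * c))

/-! ### Jacobi's identity -/

lemma tprod_qpoch_ne_zero {q : ℂ} (hq : ‖q‖ < 1) : ∏' n : ℕ, (1 - q ^ (n + 1)) ≠ 0 := by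
  have h := tprod_one_add_ne_zero_of_summable (f := fun n : ℕ => -q ^ (n + 1))
    (fun i => by simpa [← sub_eq_add_neg] using one_sub_pow_ne_zero hq i)
    (by simpa using (summable_nat_add_iff 1).mpr
          (summable_geometric_of_lt_one (norm_nonneg _) hq))
  simpa [← sub_eq_add_neg] using h

lemma tendsto_qpoch {q : ℂ} (hq : ‖q‖ < 1) :
    Tendsto (qpoch q) atTop (𝓝 (∏' n : ℕ, (1 - q ^ (n + 1)))) :=
  (ModularForm.multipliable_one_sub_pow hq).hasProd.tendsto_prod_nat

lemma exists_norm_bound {u : ℕ → ℂ} {l : ℂ} (h : Tendsto u atTop (𝓝 l)) :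
    ∃ C, ∀ n, ‖u n‖ ≤ C := by
  obtain ⟨C, hC⟩ := (Metric.isBounded_range_of_tendsto u h).exists_norm_le
  exact ⟨C, fun n => hC _ ⟨n, rfl⟩⟩

/-- Jacobi's identity `∑_{j≥0} (-1)^j (2j+1) q^(j(j+1)/2) = ∏_{n≥1} (1 - qⁿ)³`. -/
lemma jacobi_identity {q : ℂ} (hq0 : q ≠ 0) (hq : ‖q‖ < 1) :
    ∑' j : ℕ, (-1 : ℂ) ^ j * ((2 * j + 1 : ℕ) : ℂ) * q ^ (j * (j + 1) / 2)
      = (∏' n : ℕ, (1 - q ^ (n + 1))) ^ 3 := by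
  set P := ∏' n : ℕ, (1 - q ^ (n + 1)) with hP
  have hP0 : P ≠ 0 := tprod_qpoch_ne_zero hq
  have hlim : Tendsto (qpoch q) atTop (𝓝 P) := tendsto_qpoch hq
  have hlim' : Tendsto (fun n => (qpoch q n)⁻¹) atTop (𝓝 P⁻¹) := hlim.inv₀ hP0
  obtain ⟨A, hA⟩ := exists_norm_bound hlim
  obtain ⟨B, hB⟩ := exists_norm_bound hlim'
  have hA0 : 0 ≤ A := (norm_nonneg _).trans (hA 0)
  have hB0 : 0 ≤ B := (norm_nonneg _).trans (hB 0)
  have hqi : ∀ n j, ‖qinv q n j‖ ≤ B := by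
    intro n j
    unfold qinv
    split_ifs
    · exact hB _
    · simpa using hB0
  have hqilim : ∀ j, Tendsto (fun n => qinv q n j) atTop (𝓝 P⁻¹) := by
    intro j
    refine (hlim'.comp (tendsto_sub_atTop_nat j)).congr' ?_
    filter_upwards [eventually_ge_atTop j] with n hn
    simp [qinv, hn]
  have hT : Tendsto (fun n => ∑' j : ℕ, (2 * (j : ℂ) + 1) * jcoef q n j) atTop
      (𝓝 (∑' j : ℕ, (2 * (j : ℂ) + 1) * ((-1) ^ j * q ^ (j * (j + 1) / 2) * P * P⁻¹ * P⁻¹))) := by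
    refine tendsto_tsum_of_dominated_convergence
      (bound := fun j : ℕ => ‖q‖ ^ (j * (j + 1) / 2) * Real.exp ((2 * j + 1) * 1) * (A * B * B))
      ((summable_theta_bound (norm_pos_iff.2 hq0) hq 1).mul_right _) ?_ ?_
    · intro j
      unfold jcoef
      refine Tendsto.const_mul _ (Tendsto.mul (Tendsto.mul (Tendsto.const_mul _ ?_) (hqilim j)) ?_)
      · exact hlim.comp (tendsto_atTop_mono (fun n => by simp only [id]; omega) tendsto_id)
      · exact hlim'.comp (tendsto_atTop_mono (fun n => by simp only [id]; omega) tendsto_id)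
    · refine Eventually.of_forall fun n j => ?_
      have h1 : ‖2 * (j : ℂ) + 1‖ ≤ Real.exp ((2 * j + 1) * 1) := by
        have h2 : (2 * (j : ℂ) + 1) = ((2 * j + 1 : ℕ) : ℂ) := by push_cast; ring
        rw [h2, Complex.norm_natCast]
        push_cast
        have := Real.add_one_le_exp ((2 * (j : ℝ) + 1) * 1)
        linarith
      simp only [jcoef, norm_mul, norm_pow, norm_neg, norm_one, one_pow, one_mul]
      calc ‖2 * (j : ℂ) + 1‖ * (‖q‖ ^ (j * (j + 1) / 2) * ‖qpoch q (2 * n + 1)‖ * ‖qinv q n j‖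
            * ‖(qpoch q (n + j + 1))⁻¹‖)
          ≤ Real.exp ((2 * j + 1) * 1) * (‖q‖ ^ (j * (j + 1) / 2) * A * B * B) := by
            gcongr
            · exact hA _
            · exact hqi _ _
            · exact hB _
        _ = _ := by ring
  have hfin : ∀ n, ∑' j : ℕ, (2 * (j : ℂ) + 1) * jcoef q n j = qpoch q n ^ 2 := by
    intro n
    rw [← sum_jcoef hq n]
    refine tsum_eq_sum fun j hj => ?_
    rw [jcoef_eq_zero q (by simpa using hj), mul_zero]
  simp_rw [hfin] at hT
  have hkey := tendsto_nhds_unique hT (hlim.pow 2)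
  have hre : ∀ j : ℕ, (2 * (j : ℂ) + 1) * ((-1) ^ j * q ^ (j * (j + 1) / 2) * P * P⁻¹ * P⁻¹)
      = (-1 : ℂ) ^ j * ((2 * j + 1 : ℕ) : ℂ) * q ^ (j * (j + 1) / 2) * P⁻¹ := by
    intro j
    push_cast
    field_simp
  simp_rw [hre] at hkey
  rw [tsum_mul_right] at hkey
  field_simp at hkey
  rw [hkey]

/-! ### The sine series of theta and its Taylor coefficients -/

lemma norm_qq_lt_one {τ : ℂ} (hτ : 0 < τ.im) : ‖qq τ‖ < 1 := by
  rw [qq, Complex.norm_exp, Real.exp_lt_one_iff]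
  have : (2 * (π : ℂ) * I * τ).re = -(2 * π * τ.im) := by simp
  rw [this]
  have := Real.pi_pos
  have : 0 < 2 * π * τ.im := by positivity
  linarith

/-- Exchanging summations: the `n`-th Taylor coefficient of `∑ (-1)^j q^(j(j+1)/2) sin ((2j+1) w)` is
read off termwise. -/
lemma hasSum_taylor {q : ℂ} (hq0 : q ≠ 0) (hq : ‖q‖ < 1) (w : ℂ) :
    HasSum (fun n : ℕ => (-1 : ℂ) ^ n
        * (∑' j : ℕ, (-1 : ℂ) ^ j * ((2 * j + 1 : ℕ) : ℂ) ^ (2 * n + 1) * q ^ (j * (j + 1) / 2))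
        * w ^ (2 * n + 1) / (Nat.factorial (2 * n + 1) : ℂ))
      (∑' j : ℕ, (-1 : ℂ) ^ j * q ^ (j * (j + 1) / 2) * Complex.sin ((2 * j + 1) * w)) := by
  let F : ℕ × ℕ → ℂ := fun p => (-1 : ℂ) ^ p.1 * q ^ (p.1 * (p.1 + 1) / 2) *
    ((-1) ^ p.2 * ((2 * p.1 + 1) * w) ^ (2 * p.2 + 1) / (Nat.factorial (2 * p.2 + 1) : ℂ))
  have hnorm : ∀ j n, ‖F (j, n)‖ = ‖q‖ ^ (j * (j + 1) / 2) *
      (((2 * j + 1) * ‖w‖) ^ (2 * n + 1) / (Nat.factorial (2 * n + 1) : ℝ)) := by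
    intro j n
    have h2 : ‖2 * (j : ℂ) + 1‖ = 2 * j + 1 := by
      rw [show (2 * (j : ℂ) + 1) = ((2 * j + 1 : ℕ) : ℂ) by push_cast; ring, Complex.norm_natCast]
      push_cast; ring
    simp [F, h2]
  have hinj : Function.Injective fun n : ℕ => 2 * n + 1 := fun a b h => by simpa using h
  have hexp : ∀ x : ℝ, HasSum (fun n : ℕ => x ^ n / (Nat.factorial n : ℝ)) (Real.exp x) := by
    intro x
    rw [Real.exp_eq_exp_ℝ]
    exact NormedSpace.expSeries_div_hasSum_exp x
  have hodd : ∀ x : ℝ, Summable fun n : ℕ => x ^ (2 * n + 1) / (Nat.factorial (2 * n + 1) : ℝ) :=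
    fun x => (hexp x).summable.comp_injective hinj
  have hF : Summable F := by
    refine Summable.of_norm ?_
    refine (summable_prod_of_nonneg (f := fun p => ‖F p‖) fun p => norm_nonneg (F p)).2 ⟨fun j => ?_, ?_⟩
    · simp_rw [hnorm]
      exact (hodd _).mul_left _
    · refine Summable.of_nonneg_of_le (fun j => tsum_nonneg fun n => norm_nonneg _) (fun j => ?_)
        (summable_theta_bound (norm_pos_iff.2 hq0) hq ‖w‖)
      simp_rw [hnorm]
      rw [tsum_mul_left]
      gcongr
      rw [← (hexp ((2 * j + 1) * ‖w‖)).tsum_eq]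
      exact tsum_comp_le_tsum_of_inj (hexp ((2 * j + 1) * ‖w‖)).summable
        (fun n => by positivity) hinj
  have hrow : ∀ j, HasSum (fun n => F (j, n))
      ((-1 : ℂ) ^ j * q ^ (j * (j + 1) / 2) * Complex.sin ((2 * j + 1) * w)) :=
    fun j => (Complex.hasSum_sin ((2 * j + 1) * w)).mul_left ((-1 : ℂ) ^ j * q ^ (j * (j + 1) / 2))
  have htot := HasSum.prod_fiberwise (f := F) hF.hasSum hrow
  have hswap : HasSum (fun p : ℕ × ℕ => F p.swap) (∑' p, F p) :=
    (Equiv.hasSum_iff (f := F) (Equiv.prodComm ℕ ℕ)).2 hF.hasSum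
  have hcol : HasSum (fun n => ∑' j, F (j, n)) (∑' p, F p) :=
    HasSum.prod_fiberwise (f := fun p : ℕ × ℕ => F p.swap) hswap fun n =>
      (Summable.prod_factor (f := fun p : ℕ × ℕ => F p.swap) hswap.summable n).hasSum
  rw [← htot.tsum_eq] at hcol
  refine (hasSum_congr_terms fun n => ?_).2 hcol
  rw [mul_comm ((-1 : ℂ) ^ n), mul_assoc, mul_div_assoc, ← tsum_mul_right]
  refine tsum_congr fun j => ?_
  simp only [F, mul_pow]
  push_cast
  ring

/-- Pairing the half-integers `j + 1/2` and `-(j + 1/2)` in the theta series. -/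
lemma jacobiThetaFn_eq {τ : ℂ} (hτ : 0 < τ.im) (z : ℂ) :
    jacobiThetaFn z τ = -2 * Complex.exp (2 * (π : ℂ) * I * τ / 8) *
      ∑' j : ℕ, (-1 : ℂ) ^ j * qq τ ^ (j * (j + 1) / 2) * Complex.sin ((2 * j + 1) * (π * z)) := by
  have hq := norm_qq_lt_one hτ
  have hq0 : qq τ ≠ 0 := Complex.exp_ne_zero _
  set E := Complex.exp (2 * (π : ℂ) * I * τ / 8) with hE
  have hS : ∀ s : ℂ, ‖s‖ = ‖(π : ℂ) * z‖ → Summable fun j : ℕ =>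
      (-1 : ℂ) ^ j * qq τ ^ (j * (j + 1) / 2) * Complex.exp ((2 * j + 1) * s) := by
    intro s hs
    refine Summable.of_norm_bounded
      (summable_theta_bound (norm_pos_iff.2 hq0) hq ‖(π : ℂ) * z‖) fun j => ?_
    simp only [norm_mul, norm_pow, norm_neg, norm_one, one_pow, one_mul]
    gcongr
    refine (Complex.norm_exp_le_exp_norm _).trans (Real.exp_le_exp.2 ?_)
    rw [norm_mul, hs, show (2 * (j : ℂ) + 1) = ((2 * j + 1 : ℕ) : ℂ) by push_cast; ring,
      Complex.norm_natCast]
    simp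
  have hp := hS ((π : ℂ) * z * I) (by simp)
  have hm := hS (-((π : ℂ) * z * I)) (by simp)
  have hgauss : ∀ j : ℕ, Complex.exp ((π : ℂ) * I * τ * ((j : ℂ) + 1 / 2) ^ 2)
      = E * qq τ ^ (j * (j + 1) / 2) := by
    intro j
    have htri : ((j * (j + 1) / 2 : ℕ) : ℂ) = (j : ℂ) * (j + 1) / 2 := by
      rw [Nat.cast_div (Nat.even_mul_succ_self j).two_dvd (by norm_num)]
      push_cast; ring
    rw [qq, ← Complex.exp_nat_mul, hE, ← Complex.exp_add, htri]
    congr 1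
    ring
  have hsign : ∀ j : ℕ, Complex.exp ((j : ℂ) * (π * I)) = (-1) ^ j := by
    intro j
    rw [Complex.exp_nat_mul, Complex.exp_pi_mul_I]
  have hsign' : ∀ j : ℕ, Complex.exp (-((j : ℂ) * (π * I))) = (-1) ^ j := by
    intro j
    rw [Complex.exp_neg, hsign, ← inv_pow]
    norm_num
  have hI : Complex.exp (π / 2 * I) = I := Complex.exp_pi_div_two_mul_I
  have hI' : Complex.exp (-(π / 2 * I)) = -I := by rw [Complex.exp_neg, hI, Complex.inv_I]
  have hpos : HasSum (fun n : ℕ =>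
      Complex.exp (2 * (π : ℂ) * I * (((n : ℤ) : ℂ) + 1 / 2) * (z + 1 / 2)) *
        Complex.exp ((π : ℂ) * I * τ * (((n : ℤ) : ℂ) + 1 / 2) ^ 2)) (I * E * ∑' j : ℕ,
          (-1 : ℂ) ^ j * qq τ ^ (j * (j + 1) / 2) * Complex.exp ((2 * j + 1) * (π * z * I))) := by
    refine (hasSum_congr_terms fun j => ?_).2 (hp.hasSum.mul_left (I * E))
    rw [Int.cast_natCast, hgauss,
      show 2 * (π : ℂ) * I * ((j : ℂ) + 1 / 2) * (z + 1 / 2)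
        = (2 * j + 1) * (π * z * I) + j * (π * I) + π / 2 * I by ring,
      Complex.exp_add, Complex.exp_add, hsign, hI]
    ring
  have hneg : HasSum (fun n : ℕ =>
      Complex.exp (2 * (π : ℂ) * I * (((-((n : ℤ) + 1) : ℤ) : ℂ) + 1 / 2) * (z + 1 / 2)) *
        Complex.exp ((π : ℂ) * I * τ * (((-((n : ℤ) + 1) : ℤ) : ℂ) + 1 / 2) ^ 2)) (-I * E * ∑' j : ℕ,
          (-1 : ℂ) ^ j * qq τ ^ (j * (j + 1) / 2) * Complex.exp ((2 * j + 1) * -(π * z * I))) := by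
    refine (hasSum_congr_terms fun j => ?_).2 (hm.hasSum.mul_left (-I * E))
    rw [show ((-((j : ℤ) + 1) : ℤ) : ℂ) + 1 / 2 = -((j : ℂ) + 1 / 2) by push_cast; ring,
      neg_sq, hgauss,
      show 2 * (π : ℂ) * I * (-((j : ℂ) + 1 / 2)) * (z + 1 / 2)
        = (2 * j + 1) * (-(π * z * I)) + -(j * (π * I)) + -(π / 2 * I) by ring,
      Complex.exp_add, Complex.exp_add, hsign', hI']
    ring
  have hZ := HasSum.of_nat_of_neg_add_one (f := fun n : ℤ =>
    Complex.exp (2 * (π : ℂ) * I * ((n : ℂ) + 1 / 2) * (z + 1 / 2)) *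
      Complex.exp ((π : ℂ) * I * τ * ((n : ℂ) + 1 / 2) ^ 2)) hpos hneg
  rw [jacobiThetaFn, hZ.tsum_eq, ← tsum_mul_left,
    ← tsum_mul_left, ← tsum_mul_left, ← (hp.mul_left _).tsum_add (hm.mul_left _)]
  refine tsum_congr fun j => ?_
  rw [Complex.sin, show -((2 * (j : ℂ) + 1) * (π * z)) * I = (2 * j + 1) * -(π * z * I) by ring,
    show ((2 * (j : ℂ) + 1) * (π * z)) * I = (2 * j + 1) * (π * z * I) by ring]
  ring

/-- For every `τ ∈ ℍ` and every `z ∈ ℂ`,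
`∑_{n≥0} (−1)^n U_{2n}(q) (πz)^{2n+1}/(2n+1)! = −ϑ(z;τ)/(2η(τ)³)`,
the series converging for all `z ∈ ℂ`. -/
theorem U_generating_function_theta
    (τ : ℂ) (hτ : 0 < τ.im) (z : ℂ) :
    HasSum (fun n : ℕ =>
        (-1 : ℂ) ^ n * Uram n (qq τ) * ((π : ℂ) * z) ^ (2 * n + 1) /
          (Nat.factorial (2 * n + 1) : ℂ))
      (-jacobiThetaFn z τ / (2 * dedekindEtaFn τ ^ 3)) := by
  have hq := norm_qq_lt_one hτ
  have hq0 : qq τ ≠ 0 := Complex.exp_ne_zero _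
  have hP0 := tprod_qpoch_ne_zero hq
  have h := (hasSum_taylor hq0 hq ((π : ℂ) * z)).div_const
    ((∏' n : ℕ, (1 - qq τ ^ (n + 1))) ^ 3)
  have hE : Complex.exp (2 * (π : ℂ) * I * τ / 24) ^ 3 = Complex.exp (2 * (π : ℂ) * I * τ / 8) := by
    rw [← Complex.exp_nat_mul]
    congr 1
    push_cast
    ring
  have hE0 := Complex.exp_ne_zero (2 * (π : ℂ) * I * τ / 8)
  have hval : -jacobiThetaFn z τ / (2 * dedekindEtaFn τ ^ 3)
      = (∑' j : ℕ, (-1 : ℂ) ^ j * qq τ ^ (j * (j + 1) / 2) * Complex.sin ((2 * j + 1) * (π * z)))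
        / (∏' n : ℕ, (1 - qq τ ^ (n + 1))) ^ 3 := by
    rw [jacobiThetaFn_eq hτ, dedekindEtaFn, mul_pow, hE]
    generalize (∑' j : ℕ, (-1 : ℂ) ^ j * qq τ ^ (j * (j + 1) / 2) *
      Complex.sin ((2 * j + 1) * (π * z))) = S
    field_simp
  rw [hval]
  refine (hasSum_congr_terms fun n => ?_).2 h
  rw [Uram, jacobi_identity hq0 hq]
  ring
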